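/- arXiv:1805.10439 — 3 statements merged into one kernel-verified Lean document; each statement's English description precedes it below -/
import Mathlib

section
/- Let A₀, A₁, A₂, A₃, A₄ ∈ ℝ and let h : ℝ → ℝ be smooth with h'(x) ≠ 0 for all x, satisfying for all x ∈ ℝ the linear-case second-order equation ((A₀h − A₁)h'³ + A₃ + A₄x)·h'' + (A₀h'⁴ + A₂h'² − A₄)·h' = 0. Define a₀ = A₀h'⁴, a₁ = (A₁ − A₀h)h'³, a₂ = (2A₀h'² + A₂)h'², a₃ = (A₁ − A₀h)h'³ − (A₃ + A₄x), a₄ = −A₄ + A₂h'² + A₀h'⁴. Then the function F(x,y,p_x,p_y) = y·(a₀(x)p_x⁴ + a₂(x)p_x²p_y² + a₄(x)p_y⁴) + a₁(x)p_x³p_y + a₃(x)p_xp_y³ satisfies {F, H} = 0 identically on ℝ⁴, where H = (1/2)h'(x)²(p_x²+p_y²). -/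
/-- Canonical Poisson bracket on ℝ⁴ with coordinates (x, y, pₓ, p_y). -/
noncomputable def pb (F G : ℝ → ℝ → ℝ → ℝ → ℝ) (x y px py : ℝ) : ℝ :=
    deriv (fun t => F x y t py) px * deriv (fun t => G t y px py) x
  - deriv (fun t => F t y px py) x * deriv (fun t => G x y t py) px
  + deriv (fun t => F x y px t) py * deriv (fun t => G x t px py) y
  - deriv (fun t => F x t px py) y * deriv (fun t => G x y px t) py

/-- Coefficients of the quartic integral in the linear case (μ = 0). -/
noncomputable def linA0 (A0 : ℝ) (h : ℝ → ℝ) (x : ℝ) : ℝ := A0 * (deriv h x)^4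

noncomputable def linA1 (A0 A1 : ℝ) (h : ℝ → ℝ) (x : ℝ) : ℝ :=
  (A1 - A0 * h x) * (deriv h x)^3

noncomputable def linA2 (A0 A2 : ℝ) (h : ℝ → ℝ) (x : ℝ) : ℝ :=
  (2 * A0 * (deriv h x)^2 + A2) * (deriv h x)^2

noncomputable def linA3 (A0 A1 A3 A4 : ℝ) (h : ℝ → ℝ) (x : ℝ) : ℝ :=
  (A1 - A0 * h x) * (deriv h x)^3 - (A3 + A4 * x)

noncomputable def linA4 (A0 A2 A4 : ℝ) (h : ℝ → ℝ) (x : ℝ) : ℝ :=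
  -A4 + A2 * (deriv h x)^2 + A0 * (deriv h x)^4

/-!
For a Hamiltonian `ρ(x) (pₓ² + p_y²) / 2` and a quartic in the momenta whose even coefficients are
linear in `y`, the bracket is a quintic in the momenta with six coefficients. For `ρ = h'²` and the
given `aᵢ`, those of `pₓ⁵`, `pₓ³ p_y²`, `pₓ p_y⁴` and `pₓ⁴ p_y` vanish whatever `h` is. Because
`a₂ = a₀ + a₄ + A₄`, the other two, of `pₓ² p_y³` and `p_y⁵`, coincide: both are
`h' (a₃ h'' - h' a₄)`, and the differential equation says exactly that `a₃ h'' = h' a₄`.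
-/

/-- The geodesic Hamiltonian of the conformally flat metric `ρ(x)⁻¹ (dx² + dy²)`; it makes sense
also where `ρ` is not positive. -/
noncomputable def conformalHamiltonian (ρ : ℝ → ℝ) (x _y px py : ℝ) : ℝ :=
  (1 / 2) * ρ x * (px ^ 2 + py ^ 2)

/-- Quartics in the momenta whose terms even in `p_y` are multiples of `y` and whose terms odd in
`p_y` do not depend on `y`: the shape of the integrals considered here. -/
def yLinearQuartic (a₀ a₁ a₂ a₃ a₄ : ℝ → ℝ) (x y px py : ℝ) : ℝ :=
  y * (a₀ x * px ^ 4 + a₂ x * px ^ 2 * py ^ 2 + a₄ x * py ^ 4)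
    + a₁ x * px ^ 3 * py + a₃ x * px * py ^ 3

theorem pb_conformalHamiltonian (F : ℝ → ℝ → ℝ → ℝ → ℝ) (ρ : ℝ → ℝ) (x y px py : ℝ) :
    pb F (conformalHamiltonian ρ) x y px py =
      deriv ρ x / 2 * (px ^ 2 + py ^ 2) * deriv (fun t => F x y t py) px
        - ρ x * (px * deriv (fun t => F t y px py) x + py * deriv (fun t => F x t px py) y) := by
  have deriv_x : deriv (fun t => conformalHamiltonian ρ t y px py) x =
      deriv ρ x / 2 * (px ^ 2 + py ^ 2) := by
    simp only [conformalHamiltonian, deriv_mul_const_field, deriv_const_mul_field]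
    ring
  have deriv_y : deriv (fun t => conformalHamiltonian ρ x t px py) y = 0 :=
    deriv_const y _
  have deriv_px : deriv (fun t => conformalHamiltonian ρ x y t py) px = ρ x * px := by
    simp only [conformalHamiltonian, deriv_const_mul_field, deriv_add_const, deriv_pow_field]
    ring
  have deriv_py : deriv (fun t => conformalHamiltonian ρ x y px t) py = ρ x * py := by
    simp only [conformalHamiltonian, deriv_const_mul_field, deriv_const_add, deriv_pow_field]
    ring
  rw [pb, deriv_x, deriv_y, deriv_px, deriv_py]
  ring

theorem hasDerivAt_yLinearQuartic_px (a₀ a₁ a₂ a₃ a₄ : ℝ → ℝ) (x y px py : ℝ) :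
    HasDerivAt (fun t => yLinearQuartic a₀ a₁ a₂ a₃ a₄ x y t py)
      (y * (4 * a₀ x * px ^ 3 + 2 * a₂ x * px * py ^ 2)
        + 3 * a₁ x * px ^ 2 * py + a₃ x * py ^ 3) px := by
  have even_part := ((((hasDerivAt_pow 4 px).const_mul (a₀ x)).add
    (((hasDerivAt_pow 2 px).const_mul (a₂ x)).mul_const (py ^ 2))).add_const
      (a₄ x * py ^ 4)).const_mul y
  have odd_part := ((hasDerivAt_pow 3 px).const_mul (a₁ x)).mul_const py
  refine ((even_part.add odd_part).add
    (((hasDerivAt_id' px).const_mul (a₃ x)).mul_const (py ^ 3))).congr_deriv ?_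
  push_cast
  ring

theorem hasDerivAt_yLinearQuartic_y (a₀ a₁ a₂ a₃ a₄ : ℝ → ℝ) (x y px py : ℝ) :
    HasDerivAt (fun t => yLinearQuartic a₀ a₁ a₂ a₃ a₄ x t px py)
      (a₀ x * px ^ 4 + a₂ x * px ^ 2 * py ^ 2 + a₄ x * py ^ 4) y :=
  ((hasDerivAt_mul_const _).add_const _).add_const _

section YLinearQuartic

variable {a₀ a₁ a₂ a₃ a₄ : ℝ → ℝ} {x : ℝ}

theorem hasDerivAt_yLinearQuartic_x {b₀ b₁ b₂ b₃ b₄ : ℝ}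
    (h₀ : HasDerivAt a₀ b₀ x) (h₁ : HasDerivAt a₁ b₁ x) (h₂ : HasDerivAt a₂ b₂ x)
    (h₃ : HasDerivAt a₃ b₃ x) (h₄ : HasDerivAt a₄ b₄ x) (y px py : ℝ) :
    HasDerivAt (fun t => yLinearQuartic a₀ a₁ a₂ a₃ a₄ t y px py)
      (y * (b₀ * px ^ 4 + b₂ * px ^ 2 * py ^ 2 + b₄ * py ^ 4)
        + b₁ * px ^ 3 * py + b₃ * px * py ^ 3) x :=
  (((((h₀.mul_const _).add ((h₂.mul_const _).mul_const _)).add (h₄.mul_const _)).const_mul y).add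
    ((h₁.mul_const _).mul_const _)).add ((h₃.mul_const _).mul_const _)

theorem pb_yLinearQuartic_conformalHamiltonian (ρ : ℝ → ℝ) {b₀ b₁ b₂ b₃ b₄ : ℝ}
    (h₀ : HasDerivAt a₀ b₀ x) (h₁ : HasDerivAt a₁ b₁ x) (h₂ : HasDerivAt a₂ b₂ x)
    (h₃ : HasDerivAt a₃ b₃ x) (h₄ : HasDerivAt a₄ b₄ x) (y px py : ℝ) :
    pb (yLinearQuartic a₀ a₁ a₂ a₃ a₄) (conformalHamiltonian ρ) x y px py =
      y * ((2 * a₀ x * deriv ρ x - ρ x * b₀) * px ^ 5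
          + ((2 * a₀ x + a₂ x) * deriv ρ x - ρ x * b₂) * px ^ 3 * py ^ 2
          + (a₂ x * deriv ρ x - ρ x * b₄) * px * py ^ 4)
        + (3 * a₁ x * deriv ρ x / 2 - ρ x * (b₁ + a₀ x)) * px ^ 4 * py
        + ((3 * a₁ x + a₃ x) * deriv ρ x / 2 - ρ x * (b₃ + a₂ x)) * px ^ 2 * py ^ 3
        + (a₃ x * deriv ρ x / 2 - ρ x * a₄ x) * py ^ 5 := by
  rw [pb_conformalHamiltonian, (hasDerivAt_yLinearQuartic_px a₀ a₁ a₂ a₃ a₄ x y px py).deriv,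
    (hasDerivAt_yLinearQuartic_x h₀ h₁ h₂ h₃ h₄ y px py).deriv,
    (hasDerivAt_yLinearQuartic_y a₀ a₁ a₂ a₃ a₄ x y px py).deriv]
  ring

end YLinearQuartic

section LinearCase

variable {h : ℝ → ℝ} {x h'' : ℝ}

theorem hasDerivAt_linA0 (A0 : ℝ) (hd : HasDerivAt (deriv h) h'' x) :
    HasDerivAt (linA0 A0 h) (4 * A0 * deriv h x ^ 3 * h'') x := by
  refine ((hd.fun_pow 4).const_mul A0).congr_deriv ?_
  push_cast
  ring

theorem hasDerivAt_linA1 (A0 A1 : ℝ) (hh : DifferentiableAt ℝ h x)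
    (hd : HasDerivAt (deriv h) h'' x) :
    HasDerivAt (linA1 A0 A1 h)
      (3 * (A1 - A0 * h x) * deriv h x ^ 2 * h'' - A0 * deriv h x ^ 4) x := by
  refine (((hh.hasDerivAt.const_mul A0).const_sub A1).mul (hd.fun_pow 3)).congr_deriv ?_
  push_cast
  ring

theorem hasDerivAt_linA2 (A0 A2 : ℝ) (hd : HasDerivAt (deriv h) h'' x) :
    HasDerivAt (linA2 A0 A2 h) ((8 * A0 * deriv h x ^ 2 + 2 * A2) * deriv h x * h'') x := by
  have hsq := hd.fun_pow 2
  refine (((hsq.const_mul (2 * A0)).add_const A2).mul hsq).congr_deriv ?_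
  push_cast
  ring

theorem hasDerivAt_linA3 (A0 A1 A3 A4 : ℝ) (hh : DifferentiableAt ℝ h x)
    (hd : HasDerivAt (deriv h) h'' x) :
    HasDerivAt (linA3 A0 A1 A3 A4 h)
      (3 * (A1 - A0 * h x) * deriv h x ^ 2 * h'' - A0 * deriv h x ^ 4 - A4) x :=
  (hasDerivAt_linA1 A0 A1 hh hd).sub ((hasDerivAt_const_mul A4).const_add A3)

theorem hasDerivAt_linA4 (A0 A2 A4 : ℝ) (hd : HasDerivAt (deriv h) h'' x) :
    HasDerivAt (linA4 A0 A2 A4 h) ((4 * A0 * deriv h x ^ 2 + 2 * A2) * deriv h x * h'') x := by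
  refine ((((hd.fun_pow 2).const_mul A2).const_add (-A4)).add
    ((hd.fun_pow 4).const_mul A0)).congr_deriv ?_
  push_cast
  ring

theorem linA2_eq_linA0_add_linA4 (A0 A2 A4 : ℝ) (h : ℝ → ℝ) (x : ℝ) :
    linA2 A0 A2 h x = linA0 A0 h x + linA4 A0 A2 A4 h x + A4 := by
  unfold linA2 linA0 linA4
  ring

theorem pb_yLinearQuartic_linearCase (A0 A1 A2 A3 A4 : ℝ) (hh : DifferentiableAt ℝ h x)
    (hd : HasDerivAt (deriv h) h'' x) (y px py : ℝ) :
    pb (yLinearQuartic (linA0 A0 h) (linA1 A0 A1 h) (linA2 A0 A2 h) (linA3 A0 A1 A3 A4 h)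
        (linA4 A0 A2 A4 h)) (conformalHamiltonian fun t => deriv h t ^ 2) x y px py =
      deriv h x * (linA3 A0 A1 A3 A4 h x * h'' - deriv h x * linA4 A0 A2 A4 h x)
        * (px ^ 2 + py ^ 2) * py ^ 3 := by
  have deriv_factor : deriv (fun t => deriv h t ^ 2) x = 2 * deriv h x * h'' := by
    simpa using (hd.fun_pow 2).deriv
  rw [pb_yLinearQuartic_conformalHamiltonian _ (hasDerivAt_linA0 A0 hd)
    (hasDerivAt_linA1 A0 A1 hh hd) (hasDerivAt_linA2 A0 A2 hd)
    (hasDerivAt_linA3 A0 A1 A3 A4 hh hd) (hasDerivAt_linA4 A0 A2 A4 hd), deriv_factor]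
  have coeff_px5 : 2 * linA0 A0 h x * (2 * deriv h x * h'')
      - deriv h x ^ 2 * (4 * A0 * deriv h x ^ 3 * h'') = 0 := by
    unfold linA0
    ring
  have coeff_px3_py2 : (2 * linA0 A0 h x + linA2 A0 A2 h x) * (2 * deriv h x * h'')
      - deriv h x ^ 2 * ((8 * A0 * deriv h x ^ 2 + 2 * A2) * deriv h x * h'') = 0 := by
    unfold linA0 linA2
    ring
  have coeff_px_py4 : linA2 A0 A2 h x * (2 * deriv h x * h'')
      - deriv h x ^ 2 * ((4 * A0 * deriv h x ^ 2 + 2 * A2) * deriv h x * h'') = 0 := by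
    unfold linA2
    ring
  have coeff_px4_py : 3 * linA1 A0 A1 h x * (2 * deriv h x * h'') / 2
      - deriv h x ^ 2 * (3 * (A1 - A0 * h x) * deriv h x ^ 2 * h'' - A0 * deriv h x ^ 4
        + linA0 A0 h x) = 0 := by
    unfold linA0 linA1
    ring
  have coeff_px2_py3 : (3 * linA1 A0 A1 h x + linA3 A0 A1 A3 A4 h x) * (2 * deriv h x * h'') / 2
      - deriv h x ^ 2 * (3 * (A1 - A0 * h x) * deriv h x ^ 2 * h'' - A0 * deriv h x ^ 4 - A4
        + linA2 A0 A2 h x)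
      = deriv h x * (linA3 A0 A1 A3 A4 h x * h'' - deriv h x * linA4 A0 A2 A4 h x) := by
    rw [linA2_eq_linA0_add_linA4 A0 A2 A4]
    unfold linA0 linA1
    ring
  rw [coeff_px5, coeff_px3_py2, coeff_px_py4, coeff_px4_py, coeff_px2_py3]
  ring

theorem stmt_11_general {A0 A1 A2 A3 A4 : ℝ} (hh : DifferentiableAt ℝ h x)
    (hdh : DifferentiableAt ℝ (deriv h) x)
    (hode : ((A0 * h x - A1) * deriv h x ^ 3 + A3 + A4 * x) * deriv (deriv h) x
      + (A0 * deriv h x ^ 4 + A2 * deriv h x ^ 2 - A4) * deriv h x = 0) (y px py : ℝ) :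
    pb (yLinearQuartic (linA0 A0 h) (linA1 A0 A1 h) (linA2 A0 A2 h) (linA3 A0 A1 A3 A4 h)
        (linA4 A0 A2 A4 h)) (conformalHamiltonian fun t => deriv h t ^ 2) x y px py = 0 := by
  have ode : linA3 A0 A1 A3 A4 h x * deriv (deriv h) x - deriv h x * linA4 A0 A2 A4 h x = 0 := by
    unfold linA3 linA4
    linear_combination -hode
  rw [pb_yLinearQuartic_linearCase A0 A1 A2 A3 A4 hh hdh.hasDerivAt, ode]
  ring

end LinearCase

theorem stmt_11 (A0 A1 A2 A3 A4 : ℝ) (h : ℝ → ℝ)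
    (hh : ContDiff ℝ (⊤ : ℕ∞) h) (hhx : ∀ x, deriv h x ≠ 0)
    (hode : ∀ x : ℝ,
      ((A0 * h x - A1) * (deriv h x)^3 + A3 + A4 * x) * deriv (deriv h) x
        + (A0 * (deriv h x)^4 + A2 * (deriv h x)^2 - A4) * deriv h x = 0) :
    ∀ x y px py : ℝ,
      pb (fun x y px py =>
            y * (linA0 A0 h x * px^4 + linA2 A0 A2 h x * px^2 * py^2
                  + linA4 A0 A2 A4 h x * py^4)
            + linA1 A0 A1 h x * px^3 * py + linA3 A0 A1 A3 A4 h x * px * py^3)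
         (fun x _y px py => (1/2) * (deriv h x)^2 * (px^2 + py^2))
         x y px py = 0 := by
  have h₂ : ContDiff ℝ 2 h := contDiff_infty.mp hh 2
  exact fun x => stmt_11_general (h₂.differentiable two_ne_zero x)
    (h₂.differentiable_deriv_two x) (hode x)
end

section
/- Let A₀, A₁, A₂, A₄ ∈ ℝ and let h : ℝ → ℝ be smooth with h'(x) ≠ 0 and h''(x) ≠ 0 for all x, satisfying for all x ∈ ℝ the third-order equation (A₀h'⁴ + A₂h'² − A₄)·h''' − 3(A₀h − A₁)h'·(h'')³ − 3(2A₀h'² + A₂)h'·(h'')² = 0. Then there exists a real constant A₃ such that for all x ∈ ℝ: ((A₀h − A₁)h'³ + A₃ + A₄x)·h'' + (A₀h'⁴ + A₂h'² − A₄)·h' = 0. -/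
/-! Multiplying the third-order equation by the integrating factor `h' / (h'')²` turns its left-hand
side into minus the total derivative of
`(A₀h - A₁)h'³ + A₄x + (A₀h'⁴ + A₂h'² - A₄)h' / h''`. This quantity is therefore a constant `-A₃`,
and clearing the denominator `h''` gives the second-order equation. -/

open scoped ContDiff

/-- The first integral of the third-order equation, as a function of the `2`-jet `(x, u, p, q)`
standing for `(x, h x, h' x, h'' x)`. It is meant for `q ≠ 0`. -/
def firstIntegral {K : Type*} [Field K] (A0 A1 A2 A4 x u p q : K) : K :=
  (A0 * u - A1) * p ^ 3 + A4 * x + (A0 * p ^ 4 + A2 * p ^ 2 - A4) * p / q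

lemma firstIntegral_eq_neg_iff {K : Type*} [Field K] {A0 A1 A2 A3 A4 x u p q : K} (hq : q ≠ 0) :
    firstIntegral A0 A1 A2 A4 x u p q = -A3 ↔
      ((A0 * u - A1) * p ^ 3 + A3 + A4 * x) * q + (A0 * p ^ 4 + A2 * p ^ 2 - A4) * p = 0 := by
  have clear_denominator :
      ((A0 * u - A1) * p ^ 3 + A3 + A4 * x) * q + (A0 * p ^ 4 + A2 * p ^ 2 - A4) * p =
        (firstIntegral A0 A1 A2 A4 x u p q + A3) * q := by
    unfold firstIntegral
    field_simp
    ring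
  rw [clear_denominator, mul_eq_zero_iff_right hq, eq_neg_iff_add_eq_zero]

lemma hasDerivAt_firstIntegral {𝕜 : Type*} [NontriviallyNormedField 𝕜] (A0 A1 A2 A4 : 𝕜)
    {h h₁ h₂ : 𝕜 → 𝕜} {r x : 𝕜} (hh : HasDerivAt h (h₁ x) x) (hh₁ : HasDerivAt h₁ (h₂ x) x)
    (hh₂ : HasDerivAt h₂ r x) (hx : h₂ x ≠ 0) :
    HasDerivAt (fun y ↦ firstIntegral A0 A1 A2 A4 y (h y) (h₁ y) (h₂ y))
      (-(h₁ x / h₂ x ^ 2) *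
        ((A0 * h₁ x ^ 4 + A2 * h₁ x ^ 2 - A4) * r
          - 3 * (A0 * h x - A1) * h₁ x * h₂ x ^ 3
          - 3 * (2 * A0 * h₁ x ^ 2 + A2) * h₁ x * h₂ x ^ 2)) x := by
  have cubic_term : HasDerivAt (fun y ↦ (A0 * h y - A1) * h₁ y ^ 3)
      (A0 * h₁ x * h₁ x ^ 3 + (A0 * h x - A1) * (3 * h₁ x ^ 2 * h₂ x)) x := by
    simpa using ((hh.const_mul A0).sub_const A1).fun_mul (hh₁.fun_pow 3)
  have quartic : HasDerivAt (fun y ↦ A0 * h₁ y ^ 4 + A2 * h₁ y ^ 2 - A4)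
      (A0 * (4 * h₁ x ^ 3 * h₂ x) + A2 * (2 * h₁ x * h₂ x)) x := by
    simpa using (((hh₁.fun_pow 4).const_mul A0).fun_add
      ((hh₁.fun_pow 2).const_mul A2)).sub_const A4
  have quotient := (quartic.fun_mul hh₁).fun_div hh₂ hx
  refine ((cubic_term.fun_add (hasDerivAt_const_mul A4)).fun_add quotient).congr_deriv ?_
  field_simp
  ring

lemma hasDerivAt_iterate_deriv {𝕜 F : Type*} [NontriviallyNormedField 𝕜] [NormedAddCommGroup F]
    [NormedSpace 𝕜 F] {f : 𝕜 → F} (hf : ContDiff 𝕜 ∞ f) (n : ℕ) (x : 𝕜) :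
    HasDerivAt (deriv^[n] f) (deriv^[n + 1] f x) x := by
  rw [Function.iterate_succ_apply']
  exact ((hf.iterate_deriv n).differentiable (by simp) x).hasDerivAt

theorem stmt_15_general {𝕜 : Type*} [RCLike 𝕜] (A0 A1 A2 A4 : 𝕜) {U : Set 𝕜} (hU : IsOpen U)
    (hU' : IsPreconnected U) {h h₁ h₂ h₃ : 𝕜 → 𝕜}
    (hh : ∀ x ∈ U, HasDerivAt h (h₁ x) x) (hh₁ : ∀ x ∈ U, HasDerivAt h₁ (h₂ x) x)
    (hh₂ : ∀ x ∈ U, HasDerivAt h₂ (h₃ x) x) (h₂_ne : ∀ x ∈ U, h₂ x ≠ 0)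
    (hode : ∀ x ∈ U,
      (A0 * h₁ x ^ 4 + A2 * h₁ x ^ 2 - A4) * h₃ x
        - 3 * (A0 * h x - A1) * h₁ x * h₂ x ^ 3
        - 3 * (2 * A0 * h₁ x ^ 2 + A2) * h₁ x * h₂ x ^ 2 = 0) :
    ∃ A3 : 𝕜, ∀ x ∈ U,
      ((A0 * h x - A1) * h₁ x ^ 3 + A3 + A4 * x) * h₂ x
        + (A0 * h₁ x ^ 4 + A2 * h₁ x ^ 2 - A4) * h₁ x = 0 := by
  have zero_deriv (x : 𝕜) (hx : x ∈ U) :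
      HasDerivAt (fun y ↦ firstIntegral A0 A1 A2 A4 y (h y) (h₁ y) (h₂ y)) 0 x := by
    simpa only [hode x hx, mul_zero] using
      hasDerivAt_firstIntegral A0 A1 A2 A4 (hh x hx) (hh₁ x hx) (hh₂ x hx) (h₂_ne x hx)
  obtain ⟨c, hc⟩ := hU.exists_is_const_of_deriv_eq_zero hU'
    (fun x hx ↦ (zero_deriv x hx).differentiableAt.differentiableWithinAt)
    (fun x hx ↦ (zero_deriv x hx).deriv)
  refine ⟨-c, fun x hx ↦ (firstIntegral_eq_neg_iff (h₂_ne x hx)).mp ?_⟩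
  rw [neg_neg, hc x hx]

theorem stmt_15 (A0 A1 A2 A4 : ℝ) (h : ℝ → ℝ)
    (hh : ContDiff ℝ (⊤ : ℕ∞) h) (hhx : ∀ x, deriv h x ≠ 0)
    (hhxx : ∀ x, deriv (deriv h) x ≠ 0)
    (hode : ∀ x : ℝ,
      (A0 * (deriv h x)^4 + A2 * (deriv h x)^2 - A4) * deriv (deriv (deriv h)) x
        - 3 * (A0 * h x - A1) * deriv h x * (deriv (deriv h) x)^3
        - 3 * (2 * A0 * (deriv h x)^2 + A2) * deriv h x * (deriv (deriv h) x)^2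
        = 0) :
    ∃ A3 : ℝ, ∀ x : ℝ,
      ((A0 * h x - A1) * (deriv h x)^3 + A3 + A4 * x) * deriv (deriv h) x
        + (A0 * (deriv h x)^4 + A2 * (deriv h x)^2 - A4) * deriv h x = 0 := by
  obtain ⟨A3, hA3⟩ := stmt_15_general A0 A1 A2 A4 isOpen_univ isPreconnected_univ
    (fun x _ ↦ hasDerivAt_iterate_deriv hh 0 x) (fun x _ ↦ hasDerivAt_iterate_deriv hh 1 x)
    (fun x _ ↦ hasDerivAt_iterate_deriv hh 2 x) (fun x _ ↦ hhxx x) (fun x _ ↦ hode x)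
  exact ⟨A3, fun x ↦ hA3 x (Set.mem_univ x)⟩
end

section
/- Let A₀, A₂, A₄ ∈ ℝ, let h : ℝ → ℝ be smooth with h'(x) ≠ 0 for all x, let a₀, a₁, a₂, a₃, a₄ : ℝ → ℝ be smooth, and define F(x,y,p_x,p_y) = (a₀(x) + yA₀h'(x)⁴)p_x⁴ + a₁(x)p_x³p_y + (a₂(x) + y(2A₀h'(x)² + A₂)h'(x)²)p_x²p_y² + a₃(x)p_xp_y³ + (a₄(x) + y(A₀h'(x)⁴ + A₂h'(x)² − A₄))p_y⁴, and H(x,y,p_x,p_y) = (1/2)h'(x)²(p_x²+p_y²). Then {F, H} = 0 identically on ℝ⁴ if and only if for every x ∈ ℝ the following six equations hold: a₀'h' − 4a₀h'' = 0; a₁'h' − 3a₁h'' + A₀h'⁵ = 0; a₂'h' − 2a₂h'' − 4a₀h'' = 0; a₃'h' − a₃h'' − 3a₁h'' + 2A₀h'⁵ + A₂h'³ = 0; a₄'h' − 2a₂h'' = 0; a₃h'' − A₀h'⁵ − A₂h'³ + A₄h' = 0. -/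
/-!
Write `f` for the derivative of `h`, and `q` for `p_y`. The part of `F` that is linear in `y` is
`y * φ (H, q)` with `φ (H, q) = 4 A₀ H² + 2 A₂ H q² - A₄ q⁴`. As `H` does not depend on `y`, both
`H` and `q`, hence also `φ (H, q)`, Poisson commute with `H`, so that
`{F, H} = {F₀, H} - f² q φ (H, q)`, where `F₀` is the part of `F` independent of `y`. This no
longer involves `y`: it is `f` times a binary form of degree five in the momenta, which vanishes
exactly when its six coefficients do.
-/

section BinaryForm

/-- The binary form of degree `n` with coefficients `c`; `c i` belongs to `p ^ (n - i) * q ^ i`. -/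
def binaryForm {R : Type*} [CommSemiring R] {n : ℕ} (c : Fin (n + 1) → R) (p q : R) : R :=
  ∑ i, c i * p ^ (n - (i : ℕ)) * q ^ (i : ℕ)

theorem binaryForm_eq_zero_iff {R : Type*} [CommRing R] [IsDomain R] [Infinite R] {n : ℕ}
    {c : Fin (n + 1) → R} : (∀ p q, binaryForm c p q = 0) ↔ ∀ i, c i = 0 := by
  refine ⟨fun hc i => ?_, fun hc p q => by simp [binaryForm, hc]⟩
  classical
  -- Dehomogenize: at `p = 1` the form is a polynomial in `q` with infinitely many roots.
  have dehomogenized_eq_zero : Polynomial.ofFn (n + 1) c = 0 := by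
    refine Polynomial.zero_of_eval_zero _ fun q => ?_
    simpa [binaryForm, Polynomial.ofFn_eq_sum_monomial, Polynomial.eval_finsetSum] using hc 1 q
  rw [← Polynomial.ofFn_coeff_eq_val_of_lt c i.isLt, dehomogenized_eq_zero, Polynomial.coeff_zero]

variable {𝕜 : Type*} [NontriviallyNormedField 𝕜] {n : ℕ}

theorem hasDerivAt_binaryForm_coeff {a : Fin (n + 1) → 𝕜 → 𝕜} {a' : Fin (n + 1) → 𝕜} {x : 𝕜}
    (ha : ∀ i, HasDerivAt (a i) (a' i) x) (p q : 𝕜) :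
    HasDerivAt (fun t => binaryForm (fun i => a i t) p q) (binaryForm a' p q) x :=
  HasDerivAt.fun_sum fun i _ => ((ha i).mul_const _).mul_const _

theorem hasDerivAt_binaryForm_p (c : Fin (n + 1) → 𝕜) (p q : 𝕜) :
    HasDerivAt (fun t => binaryForm c t q)
      (∑ i, c i * (((n - i : ℕ) : 𝕜) * p ^ (n - i - 1 : ℕ)) * q ^ (i : ℕ)) p :=
  HasDerivAt.fun_sum fun _ _ => ((hasDerivAt_pow _ p).const_mul _).mul_const _

end BinaryForm

section GeodesicHamiltonian

/-- The geodesic Hamiltonian of the metric `f(x)⁻² (dx² + dy²)`. -/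
noncomputable def geodesicHamiltonian (f : ℝ → ℝ) (x _y p q : ℝ) : ℝ :=
  (1 / 2) * f x ^ 2 * (p ^ 2 + q ^ 2)

variable {f : ℝ → ℝ} {x : ℝ}

theorem hasDerivAt_geodesicHamiltonian_x (hf : DifferentiableAt ℝ f x) (y p q : ℝ) :
    HasDerivAt (fun t => geodesicHamiltonian f t y p q)
      (f x * deriv f x * (p ^ 2 + q ^ 2)) x :=
  (((hf.hasDerivAt.fun_pow 2).const_mul (1 / 2)).mul_const (p ^ 2 + q ^ 2)).congr_deriv
    (by push_cast; ring)

theorem hasDerivAt_geodesicHamiltonian_p (f : ℝ → ℝ) (x y p q : ℝ) :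
    HasDerivAt (fun t => geodesicHamiltonian f x y t q) (f x ^ 2 * p) p :=
  (((hasDerivAt_pow 2 p).add_const (q ^ 2)).const_mul ((1 / 2) * f x ^ 2)).congr_deriv
    (by push_cast; ring)

theorem hasDerivAt_geodesicHamiltonian_q (f : ℝ → ℝ) (x y p q : ℝ) :
    HasDerivAt (fun t => geodesicHamiltonian f x y p t) (f x ^ 2 * q) q :=
  (((hasDerivAt_pow 2 q).const_add (p ^ 2)).const_mul ((1 / 2) * f x ^ 2)).congr_deriv
    (by push_cast; ring)

theorem pb_geodesicHamiltonian (F : ℝ → ℝ → ℝ → ℝ → ℝ) (hf : DifferentiableAt ℝ f x)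
    (y p q : ℝ) :
    pb F (geodesicHamiltonian f) x y p q =
      f x * (deriv f x * (p ^ 2 + q ^ 2) * deriv (fun t => F x y t q) p
        - f x * (p * deriv (fun t => F t y p q) x + q * deriv (fun t => F x t p q) y)) := by
  have deriv_y : deriv (fun t => geodesicHamiltonian f x t p q) y = 0 := deriv_const _ _
  rw [pb, (hasDerivAt_geodesicHamiltonian_x hf y p q).deriv,
    (hasDerivAt_geodesicHamiltonian_p f x y p q).deriv, deriv_y,
    (hasDerivAt_geodesicHamiltonian_q f x y p q).deriv]
  ring

theorem pb_add_y_mul_comp_geodesicHamiltonian {F₀ : ℝ → ℝ → ℝ → ℝ} {φ : ℝ → ℝ → ℝ} {p q : ℝ}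
    {Fx Fp : ℝ} (hf : DifferentiableAt ℝ f x) (y : ℝ)
    (hFx : HasDerivAt (fun t => F₀ t p q) Fx x) (hFp : HasDerivAt (fun t => F₀ x t q) Fp p)
    (hφ : DifferentiableAt ℝ (fun E => φ E q) (geodesicHamiltonian f x y p q)) :
    pb (fun x y p q => F₀ x p q + y * φ (geodesicHamiltonian f x y p q) q)
        (geodesicHamiltonian f) x y p q =
      f x * (deriv f x * (p ^ 2 + q ^ 2) * Fp
        - f x * (p * Fx + q * φ (geodesicHamiltonian f x y p q) q)) := by
  have deriv_x := hFx.fun_add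
    ((hφ.hasDerivAt.comp x (hasDerivAt_geodesicHamiltonian_x hf y p q)).const_mul y)
  have deriv_p := hFp.fun_add
    ((hφ.hasDerivAt.comp p (hasDerivAt_geodesicHamiltonian_p f x y p q)).const_mul y)
  have deriv_y : HasDerivAt (fun t => F₀ x p q + t * φ (geodesicHamiltonian f x t p q) q)
      (1 * φ (geodesicHamiltonian f x y p q) q) y :=
    ((hasDerivAt_id' y).mul_const (φ (geodesicHamiltonian f x y p q) q)).const_add (F₀ x p q)
  simp only [Function.comp_def] at deriv_x deriv_p
  rw [pb_geodesicHamiltonian _ hf, deriv_x.deriv, deriv_p.deriv, deriv_y.deriv]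
  -- The two occurrences of the derivative of `φ` cancel because `{H, H} = 0`.
  ring

end GeodesicHamiltonian

section QuarticRootIntegral

/-- The `y`-derivative of the quartic root integral, as a function of the energy `E` and the
conserved momentum `q`. -/
def quarticRootSlope (A0 A2 A4 E q : ℝ) : ℝ :=
  4 * A0 * E ^ 2 + 2 * A2 * E * q ^ 2 - A4 * q ^ 4

/-- The quartic root integral for `μ = 0`; here `f` stands for the derivative of `h`. -/
def quarticRootIntegral (A0 A2 A4 : ℝ) (f : ℝ → ℝ) (a : Fin 5 → ℝ → ℝ) (x y p q : ℝ) : ℝ :=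
  (a 0 x + y * (A0 * f x ^ 4)) * p ^ 4 + a 1 x * p ^ 3 * q
    + (a 2 x + y * ((2 * A0 * f x ^ 2 + A2) * f x ^ 2)) * p ^ 2 * q ^ 2
    + a 3 x * p * q ^ 3 + (a 4 x + y * (A0 * f x ^ 4 + A2 * f x ^ 2 - A4)) * q ^ 4

theorem quarticRootIntegral_eq_binaryForm_add (A0 A2 A4 : ℝ) (f : ℝ → ℝ) (a : Fin 5 → ℝ → ℝ) :
    quarticRootIntegral A0 A2 A4 f a = fun x y p q =>
      binaryForm (fun i => a i x) p q
        + y * quarticRootSlope A0 A2 A4 (geodesicHamiltonian f x y p q) q := by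
  funext x y p q
  simp only [quarticRootIntegral, quarticRootSlope, geodesicHamiltonian, binaryForm,
    Nat.reduceAdd, Fin.sum_univ_five, Fin.coe_ofNat_eq_mod, Nat.reduceMod, Nat.reduceSub]
  ring

theorem pb_quarticRootIntegral (A0 A2 A4 : ℝ) {f : ℝ → ℝ} {a : Fin 5 → ℝ → ℝ} {x : ℝ}
    (hf : DifferentiableAt ℝ f x) (ha : ∀ i, DifferentiableAt ℝ (a i) x) (y p q : ℝ) :
    pb (quarticRootIntegral A0 A2 A4 f a) (geodesicHamiltonian f) x y p q =
      f x * binaryForm (n := 5) ![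
        -(deriv (a 0) x * f x - 4 * a 0 x * deriv f x),
        -(deriv (a 1) x * f x - 3 * a 1 x * deriv f x + A0 * f x ^ 5),
        -(deriv (a 2) x * f x - 2 * a 2 x * deriv f x - 4 * a 0 x * deriv f x),
        -(deriv (a 3) x * f x - a 3 x * deriv f x - 3 * a 1 x * deriv f x + 2 * A0 * f x ^ 5
          + A2 * f x ^ 3),
        -(deriv (a 4) x * f x - 2 * a 2 x * deriv f x),
        a 3 x * deriv f x - A0 * f x ^ 5 - A2 * f x ^ 3 + A4 * f x] p q := by
  rw [quarticRootIntegral_eq_binaryForm_add,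
    pb_add_y_mul_comp_geodesicHamiltonian hf y
      (hasDerivAt_binaryForm_coeff (fun i => (ha i).hasDerivAt) p q)
      (hasDerivAt_binaryForm_p _ p q) (by unfold quarticRootSlope; fun_prop)]
  simp only [binaryForm, quarticRootSlope, geodesicHamiltonian, Fin.sum_univ_five,
    Fin.sum_univ_six, Nat.reduceAdd, Fin.coe_ofNat_eq_mod, Nat.reduceMod, Nat.reduceSub,
    Matrix.cons_val]
  ring

end QuarticRootIntegral

theorem stmt_16_general (A0 A2 A4 : ℝ) {f : ℝ → ℝ} {a : Fin 5 → ℝ → ℝ}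
    (hf : Differentiable ℝ f) (hfx : ∀ x, f x ≠ 0) (ha : ∀ i, Differentiable ℝ (a i)) :
    (∀ x y p q : ℝ,
      pb (quarticRootIntegral A0 A2 A4 f a) (geodesicHamiltonian f) x y p q = 0)
    ↔ ∀ x : ℝ,
        deriv (a 0) x * f x - 4 * a 0 x * deriv f x = 0
      ∧ deriv (a 1) x * f x - 3 * a 1 x * deriv f x + A0 * f x ^ 5 = 0
      ∧ deriv (a 2) x * f x - 2 * a 2 x * deriv f x - 4 * a 0 x * deriv f x = 0
      ∧ deriv (a 3) x * f x - a 3 x * deriv f x - 3 * a 1 x * deriv f x + 2 * A0 * f x ^ 5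
          + A2 * f x ^ 3 = 0
      ∧ deriv (a 4) x * f x - 2 * a 2 x * deriv f x = 0
      ∧ a 3 x * deriv f x - A0 * f x ^ 5 - A2 * f x ^ 3 + A4 * f x = 0 := by
  refine forall_congr' fun x => ?_
  simp only [pb_quarticRootIntegral A0 A2 A4 (hf x) (fun i => ha i x), mul_eq_zero, hfx x,
    false_or, forall_const]
  rw [binaryForm_eq_zero_iff]
  simp [Fin.forall_fin_succ, -neg_sub, -neg_add_rev]

theorem stmt_16 (A0 A2 A4 : ℝ) (h a0 a1 a2 a3 a4 : ℝ → ℝ)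
    (hh : ContDiff ℝ (⊤ : ℕ∞) h) (hhx : ∀ x, deriv h x ≠ 0)
    (ha0 : ContDiff ℝ (⊤ : ℕ∞) a0) (ha1 : ContDiff ℝ (⊤ : ℕ∞) a1) (ha2 : ContDiff ℝ (⊤ : ℕ∞) a2)
    (ha3 : ContDiff ℝ (⊤ : ℕ∞) a3) (ha4 : ContDiff ℝ (⊤ : ℕ∞) a4) :
    (∀ x y px py : ℝ,
      pb (fun x y px py =>
            (a0 x + y * (A0 * (deriv h x)^4)) * px^4
            + a1 x * px^3 * py
            + (a2 x + y * ((2 * A0 * (deriv h x)^2 + A2) * (deriv h x)^2))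
                * px^2 * py^2
            + a3 x * px * py^3
            + (a4 x + y * (A0 * (deriv h x)^4 + A2 * (deriv h x)^2 - A4)) * py^4)
         (fun x _y px py => (1/2) * (deriv h x)^2 * (px^2 + py^2))
         x y px py = 0)
    ↔ (∀ x : ℝ,
        deriv a0 x * deriv h x - 4 * a0 x * deriv (deriv h) x = 0
      ∧ deriv a1 x * deriv h x - 3 * a1 x * deriv (deriv h) x
          + A0 * (deriv h x)^5 = 0
      ∧ deriv a2 x * deriv h x - 2 * a2 x * deriv (deriv h) x
          - 4 * a0 x * deriv (deriv h) x = 0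
      ∧ deriv a3 x * deriv h x - a3 x * deriv (deriv h) x
          - 3 * a1 x * deriv (deriv h) x + 2 * A0 * (deriv h x)^5
          + A2 * (deriv h x)^3 = 0
      ∧ deriv a4 x * deriv h x - 2 * a2 x * deriv (deriv h) x = 0
      ∧ a3 x * deriv (deriv h) x - A0 * (deriv h x)^5 - A2 * (deriv h x)^3
          + A4 * deriv h x = 0) :=
  stmt_16_general A0 A2 A4 (a := ![a0, a1, a2, a3, a4])
    ((contDiff_infty_iff_deriv.mp hh).2.differentiable (by simp)) hhx
    (by simp [Fin.forall_fin_succ, ha0.differentiable, ha1.differentiable, ha2.differentiable,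
      ha3.differentiable, ha4.differentiable])
end
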